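/- arXiv:1001.1783 — 2 statements merged into one kernel-verified Lean document; each statement's English description precedes it below -/
import Mathlib

section
/- Let p be a prime and let n ≥ 0. Then, as an identity in the rational numbers, a_{p^2}(n) = (∏_{w_0=0}^{p−1} (w_0+1)^{|n|_{w_0}}) · (1 + Σ_{w_1=0}^{p−1} Σ_{w_0=0}^{p−1} (w_1/(w_1+1)) · ((p − w_0 − 1)/(w_0+1)) · |n|_{w_1 w_0}), where |n|_{w_1 w_0} counts occurrences of the two-letter word w_1 w_0 in the base-p digit string of n. -/
/-- The number of integers `0 ≤ m ≤ n` such that `C(n,m)` is not divisible by `k`,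
i.e. the number of nonzero entries on row `n` of Pascal's triangle modulo `k`. -/
def rowCount (k n : ℕ) : ℕ :=
  ((Finset.range (n + 1)).filter fun m => ¬ k ∣ n.choose m).card

/-- The number of borrows when subtracting `m` from `n` in base `b` (for `m ≤ n`):
the number of indices `i ≥ 0` with `m mod b^(i+1) > n mod b^(i+1)`. -/
def borrowCount (b n m : ℕ) : ℕ :=
  ((Finset.range (Nat.digits b n).length).filter fun i => n % b ^ (i + 1) < m % b ^ (i + 1)).card

/-- `A_n(β)`: the number of `0 ≤ m ≤ n` with exactly `β` borrows
when subtracting `m` from `n` in base `b`. -/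
def borrowA (b n β : ℕ) : ℕ :=
  ((Finset.range (n + 1)).filter fun m => borrowCount b n m = β).card

/-- `B_n(β)` with respect to `L` digit positions: the number of `n < m ≤ b^L - 1` such that
exactly `β` of the indices `0 ≤ i ≤ L - 1` satisfy `m mod b^(i+1) > n mod b^(i+1)`. -/
def borrowB (b L n β : ℕ) : ℕ :=
  ((Finset.Ioc n (b ^ L - 1)).filter fun m =>
    ((Finset.range L).filter fun i => n % b ^ (i + 1) < m % b ^ (i + 1)).card = β).card

/-- The base-`b` digit string of `n`, most significant digit first (empty for `n = 0`). -/
def wordOf (b n : ℕ) : List ℕ := (Nat.digits b n).reverse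

/-- `|n|_w`: the number of occurrences of `w` as a contiguous subword of the
base-`b` digit string of `n`. -/
def subwordCount (b n : ℕ) (w : List ℕ) : ℕ :=
  ((Finset.range ((wordOf b n).length + 1 - w.length)).filter fun s =>
    ((wordOf b n).drop s).take w.length = w).card

/-- `c(w_k ⋯ w_0)` for a word `w = [w_k, …, w_0]` (most significant letter first):
`(w_k/(w_k+1)) · (∏_{h=1}^{k−1} (b−w_{k−h})/(w_{k−h}+1)) · (b−w_0−1)/(w_0+1)`. -/
def cword (b : ℕ) (w : List ℕ) : ℚ :=
  ((w.getD 0 0 : ℚ) / ((w.getD 0 0 : ℚ) + 1)) *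
    (∏ h ∈ Finset.Ico 1 (w.length - 1),
      ((b : ℚ) - (w.getD h 0 : ℚ)) / ((w.getD h 0 : ℚ) + 1)) *
    (((b : ℚ) - (w.getD (w.length - 1) 0 : ℚ) - 1) / ((w.getD (w.length - 1) 0 : ℚ) + 1))

/-- The sum `Σ c(v)c(w)⋯c(z)` over all sets of pairwise nonoverlapping contiguous subwords
of `W` (identified by their position intervals: a pair `(s, len)` denotes the subword
occupying positions `s, …, s+len-1`) whose multiset of lengths equals `P`. -/
def nonoverlapSum (b : ℕ) (W : List ℕ) (P : Multiset ℕ) : ℚ :=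
  ∑ S ∈ ((Finset.range W.length ×ˢ Finset.Icc 1 W.length).powerset.filter fun S =>
      Multiset.map Prod.snd S.val = P ∧
      (∀ q ∈ S, q.1 + q.2 ≤ W.length) ∧
      (∀ q ∈ S, ∀ r ∈ S, q ≠ r → q.1 + q.2 ≤ r.1 ∨ r.1 + r.2 ≤ q.1)),
    ∏ q ∈ S, cword b ((W.drop q.1).take q.2)

/-!
Write `n = p q + r` and `m = p t + s` with `r, s < p`. If `s ≤ r`, there is no borrow in the last
digit and `C(n, m)` has the same `p`-adic valuation as `C(q, t)`. If `s > r`, there is one and the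
valuation of `C(n, m)` is one more than that of `q * C(q - 1, t)`. Counting the `m` with small
valuation therefore gives `a_p(n) = (r + 1) a_p(q)` and
`a_{p²}(n) = (r + 1) a_{p²}(q) + (p - 1 - r) (d / (d + 1)) a_p(q)`, where `d` is the last digit of
`q`. Hence `a_p` multiplies over the digits, and each digit appended to the expansion of `q` adds to
the quotient `a_{p²} / a_p` the term of the formula that belongs to the new pair `d r`.
-/

section Valuation

open scoped Nat

variable {p : ℕ} [hp : Fact p.Prime] {k q r s t : ℕ}

lemma padicValNat_factorial_mul_add_eq (q : ℕ) (hr : r < p) :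
    padicValNat p (p * q + r)! = padicValNat p q ! + q := by
  rw [padicValNat_factorial_mul_add q hr, padicValNat_factorial_mul]

lemma padicValNat_add_choose_add_factorial (i j : ℕ) :
    padicValNat p ((i + j).choose i) + padicValNat p i ! + padicValNat p j ! =
      padicValNat p (i + j)! := by
  have choose_ne_zero : (i + j).choose i ≠ 0 := (Nat.choose_pos (Nat.le_add_right i j)).ne'
  rw [← Nat.add_choose_mul_factorial_mul_factorial, ← Nat.choose_symm_add,
    padicValNat.mul (mul_ne_zero choose_ne_zero i.factorial_ne_zero) j.factorial_ne_zero,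
    padicValNat.mul choose_ne_zero i.factorial_ne_zero]

lemma padicValNat_choose_of_no_borrow (hr : r < p) (hs : s ≤ r) (ht : t ≤ q) :
    padicValNat p ((p * q + r).choose (p * t + s)) = padicValNat p (q.choose t) := by
  obtain ⟨u, rfl⟩ := Nat.exists_eq_add_of_le ht
  obtain ⟨v, rfl⟩ := Nat.exists_eq_add_of_le hs
  have split : p * (t + u) + (s + v) = (p * t + s) + (p * u + v) := by ring
  have val_large := padicValNat_add_choose_add_factorial (p := p) (p * t + s) (p * u + v)
  have val_small := padicValNat_add_choose_add_factorial (p := p) t u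
  rw [← split, padicValNat_factorial_mul_add_eq _ hr,
    padicValNat_factorial_mul_add_eq t (by lia),
    padicValNat_factorial_mul_add_eq u (by lia)] at val_large
  lia

lemma padicValNat_choose_of_borrow (hs : r < s) (hsp : s < p) (ht : t < q) :
    padicValNat p ((p * q + r).choose (p * t + s)) =
      padicValNat p (q * (q - 1).choose t) + 1 := by
  obtain ⟨u, rfl⟩ := Nat.exists_eq_add_of_lt ht
  have split : p * (t + u + 1) + r = (p * t + s) + (p * u + (p + r - s)) := by
    have : p * (t + u + 1) = p * t + p * u + p := by ring
    lia
  have val_large :=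
    padicValNat_add_choose_add_factorial (p := p) (p * t + s) (p * u + (p + r - s))
  have val_small := padicValNat_add_choose_add_factorial (p := p) t u
  rw [← split, padicValNat_factorial_mul_add_eq _ (hs.trans hsp),
    padicValNat_factorial_mul_add_eq t hsp, padicValNat_factorial_mul_add_eq u (by lia),
    Nat.factorial_succ, padicValNat.mul (t + u).succ_ne_zero (t + u).factorial_ne_zero] at val_large
  rw [Nat.add_sub_cancel, padicValNat.mul (t + u).succ_ne_zero
    (Nat.choose_pos (Nat.le_add_right t u)).ne']
  lia

lemma pow_dvd_choose_iff_of_no_borrow (hr : r < p) (hs : s ≤ r) (ht : t ≤ q) :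
    p ^ k ∣ (p * q + r).choose (p * t + s) ↔ p ^ k ∣ q.choose t := by
  have le : p * t + s ≤ p * q + r := by gcongr
  rw [padicValNat_dvd_iff_le (Nat.choose_pos le).ne',
    padicValNat_dvd_iff_le (Nat.choose_pos ht).ne', padicValNat_choose_of_no_borrow hr hs ht]

lemma pow_succ_dvd_choose_iff_of_borrow (hs : r < s) (hsp : s < p) (ht : t < q) :
    p ^ (k + 1) ∣ (p * q + r).choose (p * t + s) ↔ p ^ k ∣ q * (q - 1).choose t := by
  have le : p * t + s ≤ p * q + r := by
    have : p * (t + 1) ≤ p * q := Nat.mul_le_mul_left p ht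
    lia
  have choose_ne_zero : (q - 1).choose t ≠ 0 := (Nat.choose_pos (by lia)).ne'
  rw [padicValNat_dvd_iff_le (Nat.choose_pos le).ne',
    padicValNat_dvd_iff_le (mul_ne_zero (by lia) choose_ne_zero),
    padicValNat_choose_of_borrow hs hsp ht, Nat.add_le_add_iff_right]

end Valuation

section RowCount

open Finset

/-- The number of `t < q` such that `k` does not divide `q * C(q - 1, t)`. For `k` a power of a
prime `p` and `r < s < p`, this is the number of entries `C(p * q + r, p * t + s)` with varying `t`
that `p * k` does not divide. -/
def borrowRowCount (k q : ℕ) : ℕ :=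
  #{t ∈ range q | ¬ k ∣ q * (q - 1).choose t}

lemma rowCount_zero {k : ℕ} (hk : k ≠ 1) : rowCount k 0 = 1 := by
  simp [rowCount, filter_true_of_mem, hk]

lemma rowCount_eq_card_filter_range (k : ℕ) {n N : ℕ} (hN : n < N) :
    rowCount k n = #{m ∈ range N | ¬ k ∣ n.choose m} := by
  refine congrArg card (Subset.antisymm (filter_subset_filter _ (range_mono hN)) fun m hm => ?_)
  obtain ⟨-, not_dvd⟩ := mem_filter.1 hm
  refine mem_filter.2 ⟨mem_range_succ_iff.2 (not_lt.1 fun lt => not_dvd ?_), not_dvd⟩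
  simp [Nat.choose_eq_zero_of_lt lt]

lemma card_filter_range_mul (b M : ℕ) (P : ℕ → Prop) [DecidablePred P] :
    #{m ∈ range (b * M) | P m} = ∑ s ∈ range b, #{t ∈ range M | P (b * t + s)} := by
  simp only [card_filter]
  rw [sum_comm]
  induction M with
  | zero => simp
  | succ M ih => rw [Nat.mul_succ, sum_range_add, sum_range_succ, ih]

variable {p : ℕ} [hp : Fact p.Prime] {r s : ℕ}

lemma card_not_dvd_choose_of_no_borrow (k q : ℕ) (hr : r < p) (hs : s ≤ r) :
    #{t ∈ range (q + 1) | ¬ p ^ k ∣ (p * q + r).choose (p * t + s)} = rowCount (p ^ k) q :=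
  congrArg card <| filter_congr fun _ ht =>
    not_congr (pow_dvd_choose_iff_of_no_borrow hr hs (mem_range_succ_iff.1 ht))

lemma card_not_dvd_choose_of_borrow (k q : ℕ) (hs : r < s) (hsp : s < p) :
    #{t ∈ range (q + 1) | ¬ p ^ (k + 1) ∣ (p * q + r).choose (p * t + s)} =
      borrowRowCount (p ^ k) q := by
  have last_eq_zero : (p * q + r).choose (p * q + s) = 0 := Nat.choose_eq_zero_of_lt (by lia)
  rw [range_add_one, filter_insert, if_neg (by simp [last_eq_zero])]
  exact congrArg card <| filter_congr fun _ ht =>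
    not_congr (pow_succ_dvd_choose_iff_of_borrow hs hsp (mem_range.1 ht))

lemma rowCount_pow_succ_mul_add (k q : ℕ) (hr : r < p) :
    rowCount (p ^ (k + 1)) (p * q + r) =
      (r + 1) * rowCount (p ^ (k + 1)) q + (p - (r + 1)) * borrowRowCount (p ^ k) q := by
  have no_borrow : ∀ s ∈ range (r + 1),
      #{t ∈ range (q + 1) | ¬ p ^ (k + 1) ∣ (p * q + r).choose (p * t + s)} =
        rowCount (p ^ (k + 1)) q := fun s hs =>
    card_not_dvd_choose_of_no_borrow (k + 1) q hr (mem_range_succ_iff.1 hs)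
  have borrow : ∀ s ∈ Ico (r + 1) p,
      #{t ∈ range (q + 1) | ¬ p ^ (k + 1) ∣ (p * q + r).choose (p * t + s)} =
        borrowRowCount (p ^ k) q := fun s hs =>
    card_not_dvd_choose_of_borrow k q (mem_Ico.1 hs).1 (mem_Ico.1 hs).2
  rw [rowCount_eq_card_filter_range _ (N := p * (q + 1)) (by lia), card_filter_range_mul,
    ← sum_range_add_sum_Ico _ (Nat.succ_le_of_lt hr), sum_congr rfl no_borrow,
    sum_congr rfl borrow]
  simp

lemma rowCount_prime_mul_add (q : ℕ) (hr : r < p) :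
    rowCount p (p * q + r) = (r + 1) * rowCount p q := by
  simpa [borrowRowCount] using rowCount_pow_succ_mul_add 0 q hr

lemma borrowRowCount_of_dvd {k q : ℕ} (h : k ∣ q) : borrowRowCount k q = 0 := by
  simp [borrowRowCount, h.mul_right]

lemma borrowRowCount_prime_succ {q : ℕ} (h : ¬ p ∣ q + 1) :
    borrowRowCount p (q + 1) = rowCount p q := by
  simp [borrowRowCount, rowCount, hp.out.dvd_mul, h]

lemma mod_add_one_mul_borrowRowCount_prime (q : ℕ) :
    (q % p + 1) * borrowRowCount p q = q % p * rowCount p q := by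
  obtain ⟨t, d, hd, rfl⟩ : ∃ t d, d < p ∧ q = p * t + d :=
    ⟨q / p, q % p, Nat.mod_lt q hp.out.pos, (Nat.div_add_mod q p).symm⟩
  rw [Nat.mul_add_mod, Nat.mod_eq_of_lt hd]
  rcases d with _ | d
  · simp [borrowRowCount_of_dvd]
  · have not_dvd : ¬ p ∣ p * t + d + 1 := by
      rw [add_assoc, Nat.dvd_add_right (dvd_mul_right p t)]
      exact Nat.not_dvd_of_pos_of_lt d.succ_pos hd
    rw [rowCount_prime_mul_add t hd, ← add_assoc, borrowRowCount_prime_succ not_dvd,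
      rowCount_prime_mul_add t (Nat.lt_of_succ_lt hd)]
    ring

lemma rowCount_prime_sq_mul_add (q : ℕ) (hr : r < p) :
    (rowCount (p ^ 2) (p * q + r) : ℚ) = (r + 1) * rowCount (p ^ 2) q +
      (p - r - 1) * ((q % p : ℕ) / ((q % p : ℕ) + 1) * rowCount p q) := by
  have borrow_eq : (borrowRowCount p q : ℚ) = (q % p : ℕ) / ((q % p : ℕ) + 1) * rowCount p q := by
    field_simp
    rw [mul_comm]
    exact_mod_cast mod_add_one_mul_borrowRowCount_prime q
  have recurrence := rowCount_pow_succ_mul_add 1 q hr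
  rw [pow_one] at recurrence
  rw [recurrence, ← borrow_eq]
  push_cast [Nat.cast_sub (Nat.succ_le_of_lt hr)]
  ring

end RowCount

section Words

open Finset

variable {b : ℕ} {q r : ℕ}

@[elab_as_elim]
lemma base_induction (hb : 1 < b) {P : ℕ → Prop} (n : ℕ) (zero : P 0)
    (mul_add : ∀ q r, r < b → P q → P (b * q + r)) : P n := by
  induction n using Nat.strong_induction_on with
  | _ n ih =>
    rcases n.eq_zero_or_pos with rfl | pos
    · exact zero
    · rw [← Nat.div_add_mod n b]
      exact mul_add _ _ (Nat.mod_lt n (by lia)) (ih _ (Nat.div_lt_self pos hb))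

lemma wordOf_zero (b : ℕ) : wordOf b 0 = [] := by
  simp [wordOf]

lemma wordOf_mul_add (hb : 1 < b) (hr : r < b) (hrq : r ≠ 0 ∨ q ≠ 0) :
    wordOf b (b * q + r) = wordOf b q ++ [r] := by
  rw [wordOf, add_comm, Nat.digits_add b hb r q hr hrq, List.reverse_cons, wordOf]

lemma singleton_suffix_wordOf_iff (hb : 1 < b) (hq : q ≠ 0) (v : ℕ) :
    [v] <:+ wordOf b q ↔ v = q % b := by
  have last : wordOf b q = wordOf b (q / b) ++ [q % b] := by
    rw [wordOf, Nat.digits_def' hb (Nat.pos_of_ne_zero hq), List.reverse_cons, wordOf]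
  rw [last, List.singleton_suffix_append_singleton_iff]

lemma pair_suffix_append_singleton_iff {α : Type*} {x y z : α} {l : List α} :
    [x, y] <:+ l ++ [z] ↔ [x] <:+ l ∧ y = z := by
  rw [← List.reverse_prefix, ← List.reverse_prefix]
  simp [and_comm]

lemma subwordCount_zero (b : ℕ) {w : List ℕ} (hw : w ≠ []) : subwordCount b 0 w = 0 := by
  have : 0 < w.length := List.length_pos_iff.2 hw
  simp [subwordCount, wordOf_zero, Nat.sub_eq_zero_of_le this]

lemma subwordCount_mul_add (hb : 1 < b) (hr : r < b) (hrq : r ≠ 0 ∨ q ≠ 0) (w : List ℕ) :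
    subwordCount b (b * q + r) w =
      subwordCount b q w + if w <:+ wordOf b q ++ [r] then 1 else 0 := by
  rw [subwordCount, wordOf_mul_add hb hr hrq, subwordCount]
  generalize wordOf b q = W
  simp only [List.length_append, List.length_singleton, card_filter]
  rcases le_or_gt w.length (W.length + 1) with le | gt
  · rw [Nat.sub_add_comm le, sum_range_succ]
    congr 1
    · refine sum_congr rfl fun i hi => ?_
      rw [mem_range] at hi
      rw [List.drop_append_of_le_length (by lia),
        List.take_append_of_le_length (by rw [List.length_drop]; lia)]
    · rw [List.take_of_length_le (by grind)]
      simp [List.suffix_iff_eq_drop, eq_comm]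
  · have not_suffix : ¬ w <:+ W ++ [r] := fun suffix => by
      simpa using gt.trans_le suffix.length_le
    simp [not_suffix, show W.length + 1 + 1 - w.length = 0 by lia,
      show W.length + 1 - w.length = 0 by lia]

lemma prod_pow_subwordCount_mul_add {M : Type*} [CommMonoid M] {f : ℕ → M} (hf : f 0 = 1)
    (hb : 1 < b) (q : ℕ) (hr : r < b) :
    ∏ w ∈ range b, f w ^ subwordCount b (b * q + r) [w] =
      f r * ∏ w ∈ range b, f w ^ subwordCount b q [w] := by
  by_cases hrq : r ≠ 0 ∨ q ≠ 0
  · simp only [subwordCount_mul_add hb hr hrq, List.singleton_suffix_append_singleton_iff, pow_add,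
      prod_mul_distrib, pow_ite, pow_one, pow_zero, prod_ite_eq', mem_range, hr, if_true]
    exact mul_comm _ _
  · obtain ⟨rfl, rfl⟩ : r = 0 ∧ q = 0 := by lia
    simp [hf]

lemma sum_mul_subwordCount_mul_add {R : Type*} [Semiring R] {c : ℕ → ℕ → R}
    (hc : ∀ w, c 0 w = 0) (hb : 1 < b) (q : ℕ) (hr : r < b) :
    ∑ w₁ ∈ range b, ∑ w₀ ∈ range b, c w₁ w₀ * (subwordCount b (b * q + r) [w₁, w₀] : R) =
      (∑ w₁ ∈ range b, ∑ w₀ ∈ range b, c w₁ w₀ * (subwordCount b q [w₁, w₀] : R)) +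
        c (q % b) r := by
  rcases eq_or_ne q 0 with rfl | hq
  · rcases eq_or_ne r 0 with rfl | hr₀
    · simp [hc]
    · simp only [subwordCount_mul_add hb hr (.inl hr₀), pair_suffix_append_singleton_iff,
        wordOf_zero]
      simp [hc]
  · have : q % b < b := Nat.mod_lt q (by lia)
    simp [subwordCount_mul_add hb hr (.inr hq), pair_suffix_append_singleton_iff,
      singleton_suffix_wordOf_iff hb hq, mul_add, sum_add_distrib, ite_and, hr, this]

end Words

lemma prod_succ_pow_subwordCount_eq_rowCount {p : ℕ} [hp : Fact p.Prime] (n : ℕ) :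
    ∏ w ∈ Finset.range p, ((w : ℚ) + 1) ^ subwordCount p n [w] = rowCount p n := by
  induction n using base_induction hp.out.one_lt with
  | zero => simp [subwordCount_zero, rowCount_zero hp.out.ne_one]
  | mul_add q r hr ih =>
    rw [prod_pow_subwordCount_mul_add (f := fun w : ℕ => (w : ℚ) + 1) (by simp) hp.out.one_lt q hr,
      ih, rowCount_prime_mul_add q hr]
    push_cast
    rfl

/-- For a prime `p` and `n ≥ 0`, as an identity in the rational numbers:
`a_{p^2}(n) = (∏_{w₀=0}^{p−1} (w₀+1)^{|n|_{w₀}})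
  · (1 + Σ_{w₁=0}^{p−1} Σ_{w₀=0}^{p−1} (w₁/(w₁+1)) · ((p−w₀−1)/(w₀+1)) · |n|_{w₁w₀})`. -/
theorem stmt12 (p : ℕ) (hp : p.Prime) (n : ℕ) :
    (rowCount (p ^ 2) n : ℚ) =
      (∏ w0 ∈ Finset.range p, ((w0 : ℚ) + 1) ^ subwordCount p n [w0]) *
        (1 + ∑ w1 ∈ Finset.range p, ∑ w0 ∈ Finset.range p,
          ((w1 : ℚ) / ((w1 : ℚ) + 1)) * (((p : ℚ) - (w0 : ℚ) - 1) / ((w0 : ℚ) + 1)) *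
            (subwordCount p n [w1, w0] : ℚ)) := by
  have := Fact.mk hp
  rw [prod_succ_pow_subwordCount_eq_rowCount]
  induction n using base_induction hp.one_lt with
  | zero =>
    have sq_ne_one : p ^ 2 ≠ 1 := (Nat.one_lt_pow two_ne_zero hp.one_lt).ne'
    simp [subwordCount_zero, rowCount_zero hp.ne_one, rowCount_zero sq_ne_one]
  | mul_add q r hr ih =>
    rw [sum_mul_subwordCount_mul_add (c := fun w₁ w₀ : ℕ =>
        (w₁ / (w₁ + 1) * ((p - w₀ - 1) / (w₀ + 1)) : ℚ)) (by simp) hp.one_lt q hr,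
      rowCount_prime_sq_mul_add q hr, rowCount_prime_mul_add q hr, ih]
    push_cast
    field_simp
    ring
end

section
/- For every n ≥ 0, the number of nonzero entries on row n of Pascal's triangle modulo 16 satisfies, as an identity in the rational numbers, a_{16}(n) = 2^{|n|_1} · (1 + (5/12)|n|_{10} + (1/2)|n|_{100} + (1/8)|n|_{110} + 2|n|_{1000} + (1/2)|n|_{1010} + (1/2)|n|_{1100} + (1/8)|n|_{1110} + (1/16)|n|_{10}^2 + (1/2)|n|_{10}|n|_{100} + (1/8)|n|_{10}|n|_{110} + (1/48)|n|_{10}^3), where subword counts are taken in the base-2 representation of n. -/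
/-!
Kummer's theorem, read one digit at a time. When a carry `c ∈ {0, 1}` enters the addition
`m + (n - m - c)`, the coefficient `n! / (m! (n - m - c)!)` has the same `p`-adic valuation as the
one obtained by deleting the last base-`p` digits, with the outgoing carry in place of `c`, plus
that outgoing carry. Let `T_j(n)` and `S_j(n)` count the `m` for which this coefficient is not
divisible by `p ^ j`, for `c = 0` and `c = 1` respectively. Sorting by the last digit of `m` gives

* `T_{j+1}(pn + d) = (d + 1) T_{j+1}(n) + (p - 1 - d) S_j(n)`,
* `S_{j+1}(pn + d) = d T_{j+1}(n) + (p - d) S_j(n)`.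

For `p = 2`, divide by `2 ^ |n|_1`. Appending a digit to `n` changes `|n|_w` by the indicator of
`w` being a suffix of the new digit string. So `S_j` can be read off from `T_j` and `S_{j-1}` as a
polynomial in subword counts and suffix indicators, and summing its values along the prefixes of
the digit string gives `T_{j+1}` as a polynomial in subword counts, up to `T_4`.
-/

open scoped Nat

/-- The integer `n! / (m! (n - m - c)!)`, which is `0` when `n < m + c`. It is the binomial
coefficient for `c = 0`, and in the base-`p` addition `m + (n - m)` it takes over the role of the
binomial coefficient of the leading digits when a carry `c` enters them. -/
def carryChoose (c n m : ℕ) : ℕ := (m + 1).ascFactorial c * n.choose (m + c)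

lemma carryChoose_zero (n m : ℕ) : carryChoose 0 n m = n.choose m := by
  simp [carryChoose]

lemma carryChoose_eq_zero_of_lt {c n m : ℕ} (h : n < m + c) : carryChoose c n m = 0 := by
  rw [carryChoose, Nat.choose_eq_zero_of_lt h, mul_zero]

lemma carryChoose_mul_factorial_mul_factorial (c m l : ℕ) :
    carryChoose c (m + l + c) m * m ! * l ! = (m + l + c)! := by
  calc carryChoose c (m + l + c) m * m ! * l !
      = (l + (m + c)).choose (m + c) * l ! * (m ! * (m + 1).ascFactorial c) := by
        rw [carryChoose, show m + l + c = l + (m + c) by ring]; ring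
    _ = (m + l + c)! := by
        rw [Nat.factorial_mul_ascFactorial, Nat.add_choose_mul_factorial_mul_factorial,
          show m + l + c = l + (m + c) by ring]

lemma carryChoose_add_ne_zero (c m l : ℕ) : carryChoose c (m + l + c) m ≠ 0 := by
  have h : carryChoose c (m + l + c) m * m ! * l ! ≠ 0 :=
    carryChoose_mul_factorial_mul_factorial c m l ▸ Nat.factorial_ne_zero _
  exact left_ne_zero_of_mul (left_ne_zero_of_mul h)

section Prime

variable {p : ℕ} [Fact p.Prime]

lemma padicValNat_carryChoose_add (c m l : ℕ) :
    padicValNat p (carryChoose c (m + l + c) m) + padicValNat p m ! + padicValNat p l ! =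
      padicValNat p (m + l + c)! := by
  have hm := Nat.factorial_ne_zero m
  have hl := Nat.factorial_ne_zero l
  have hc := carryChoose_add_ne_zero c m l
  rw [← carryChoose_mul_factorial_mul_factorial c m l, padicValNat.mul (mul_ne_zero hc hm) hl,
    padicValNat.mul hc hm]

lemma padicValNat_factorial_mul_add_eq_add (m : ℕ) {e : ℕ} (he : e < p) :
    padicValNat p (p * m + e)! = padicValNat p m ! + m := by
  rw [padicValNat_factorial_mul_add m he, padicValNat_factorial_mul]

/-- One digit of Kummer's theorem: adding the last digits `e` and `f` to the incoming carry `c`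
produces `e + f + c = p * c' + d`, and the valuation drops by the outgoing carry `c'`. -/
lemma padicValNat_carryChoose_mul_add {c c' d e f : ℕ} (hd : d < p) (he : e < p) (hf : f < p)
    (h : e + f + c = p * c' + d) (k l : ℕ) :
    padicValNat p (carryChoose c (p * (k + l + c') + d) (p * k + e)) =
      padicValNat p (carryChoose c' (k + l + c') k) + c' := by
  have split : p * (k + l + c') + d = p * k + e + (p * l + f) + c := by linarith
  have low := padicValNat_carryChoose_add (p := p) c (p * k + e) (p * l + f)
  have high := padicValNat_carryChoose_add (p := p) c' k l
  rw [← split, padicValNat_factorial_mul_add_eq_add _ hd, padicValNat_factorial_mul_add_eq_add _ he,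
    padicValNat_factorial_mul_add_eq_add _ hf] at low
  lia

lemma pow_dvd_carryChoose_mul_add {c c' d e f : ℕ} (hd : d < p) (he : e < p) (hf : f < p)
    (h : e + f + c = p * c' + d) (j n k : ℕ) :
    p ^ (j + c') ∣ carryChoose c (p * n + d) (p * k + e) ↔ p ^ j ∣ carryChoose c' n k := by
  rcases lt_or_ge n (k + c') with hn | hn
  · have hlow : p * n + d < p * k + e + c := by nlinarith
    simp only [carryChoose_eq_zero_of_lt hn, carryChoose_eq_zero_of_lt hlow, dvd_zero]
  · obtain ⟨l, rfl⟩ : ∃ l, n = k + l + c' := ⟨n - (k + c'), by lia⟩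
    have split : p * (k + l + c') + d = p * k + e + (p * l + f) + c := by linarith
    have ne_zero : carryChoose c (p * (k + l + c') + d) (p * k + e) ≠ 0 :=
      split ▸ carryChoose_add_ne_zero c (p * k + e) (p * l + f)
    rw [padicValNat_dvd_iff_le ne_zero, padicValNat_dvd_iff_le (carryChoose_add_ne_zero c' k l),
      padicValNat_carryChoose_mul_add hd he hf h, Nat.add_le_add_iff_right]

end Prime

/-- The number of `m ≤ n` such that `carryChoose c n m` is not divisible by `k`. -/
def carryRowCount (c k n : ℕ) : ℕ :=
  ((Finset.range (n + 1)).filter fun m => ¬ k ∣ carryChoose c n m).card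

lemma carryRowCount_zero_left (k n : ℕ) : carryRowCount 0 k n = rowCount k n := by
  simp only [carryRowCount, carryChoose_zero, rowCount]

lemma carryRowCount_one_right (c n : ℕ) : carryRowCount c 1 n = 0 := by
  simp [carryRowCount]

lemma carryRowCount_eq_sum_range (c k : ℕ) {n N : ℕ} (h : n < N) :
    carryRowCount c k n = ∑ m ∈ Finset.range N, if k ∣ carryChoose c n m then 0 else 1 := by
  rw [carryRowCount, Finset.card_filter]
  simp only [ite_not]
  refine Finset.sum_subset (Finset.range_mono h) fun m _ hm => ?_
  have hlt : n < m + c := by rw [Finset.mem_range] at hm; lia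
  simp [carryChoose_eq_zero_of_lt hlt]

lemma sum_range_mul_eq_sum_sum {M : Type*} [AddCommMonoid M] (f : ℕ → M) (p N : ℕ) :
    ∑ m ∈ Finset.range (p * N), f m =
      ∑ e ∈ Finset.range p, ∑ k ∈ Finset.range N, f (p * k + e) := by
  rw [Finset.sum_comm]
  induction N with
  | zero => simp
  | succ N ih => rw [mul_add_one, Finset.sum_range_add, ih, Finset.sum_range_succ]

lemma carryRowCount_mul_add {p : ℕ} [Fact p.Prime] {c d : ℕ} (hc : c ≤ 1) (hd : d < p) (j n : ℕ) :
    carryRowCount c (p ^ (j + 1)) (p * n + d) =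
      (d + 1 - c) * carryRowCount 0 (p ^ (j + 1)) n +
        (p - (d + 1 - c)) * carryRowCount 1 (p ^ j) n := by
  have no_carry : ∀ e ∈ Finset.range (d + 1 - c), ∀ k,
      p ^ (j + 1) ∣ carryChoose c (p * n + d) (p * k + e) ↔
        p ^ (j + 1) ∣ carryChoose 0 n k := fun e he k => by
    rw [Finset.mem_range] at he
    exact pow_dvd_carryChoose_mul_add (c' := 0) (f := d - c - e) hd (by lia) (by lia) (by lia) ..
  have carry : ∀ e ∈ Finset.Ico (d + 1 - c) p, ∀ k,
      p ^ (j + 1) ∣ carryChoose c (p * n + d) (p * k + e) ↔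
        p ^ j ∣ carryChoose 1 n k := fun e he k => by
    rw [Finset.mem_Ico] at he
    exact pow_dvd_carryChoose_mul_add (c' := 1) (f := p + d - c - e) hd (by lia) (by lia)
      (by lia) ..
  calc carryRowCount c (p ^ (j + 1)) (p * n + d)
      = ∑ e ∈ Finset.range p, ∑ k ∈ Finset.range (n + 1),
          if p ^ (j + 1) ∣ carryChoose c (p * n + d) (p * k + e) then 0 else 1 := by
        rw [carryRowCount_eq_sum_range c _ (show p * n + d < p * (n + 1) by lia),
          sum_range_mul_eq_sum_sum]
    _ = ∑ _ ∈ Finset.range (d + 1 - c), carryRowCount 0 (p ^ (j + 1)) n +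
          ∑ _ ∈ Finset.Ico (d + 1 - c) p, carryRowCount 1 (p ^ j) n := by
        rw [← Finset.sum_range_add_sum_Ico _ (show d + 1 - c ≤ p by lia)]
        congr 1 <;> refine Finset.sum_congr rfl fun e he => ?_
        · simp only [carryRowCount_eq_sum_range _ _ n.lt_succ_self, no_carry e he]
        · simp only [carryRowCount_eq_sum_range _ _ n.lt_succ_self, carry e he]
    _ = _ := by simp only [Finset.sum_const, Finset.card_range, Nat.card_Ico, smul_eq_mul]

/-- The number of positions at which `w` occurs as a contiguous subword of `W`. -/
def occurrenceCount {α : Type*} [DecidableEq α] (W w : List α) : ℕ :=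
  ((Finset.range (W.length + 1 - w.length)).filter fun s => (W.drop s).take w.length = w).card

lemma occurrenceCount_concat {α : Type*} [DecidableEq α] (W : List α) (d : α) {w : List α}
    (hw : w ≠ []) :
    occurrenceCount (W ++ [d]) w = occurrenceCount W w + if w <:+ W ++ [d] then 1 else 0 := by
  have hpos : 0 < w.length := List.length_pos_iff.mpr hw
  have hlen : (W ++ [d]).length = W.length + 1 := by simp
  simp only [occurrenceCount, Finset.card_filter]
  rcases le_or_gt w.length (W.length + 1) with hle | hlt
  · have earlier : ∀ s ∈ Finset.range (W.length + 1 - w.length),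
        ((W ++ [d]).drop s).take w.length = (W.drop s).take w.length := fun s hs => by
      rw [Finset.mem_range] at hs
      rw [List.drop_append_of_le_length (by lia),
        List.take_append_of_le_length (by rw [List.length_drop]; lia)]
    have last : ((W ++ [d]).drop (W.length + 1 - w.length)).take w.length = w ↔
        w <:+ W ++ [d] := by
      rw [List.suffix_iff_eq_drop, hlen,
        List.take_of_length_le (by rw [List.length_drop, hlen]; lia), eq_comm]
    rw [hlen, Nat.succ_sub hle, Finset.sum_range_succ, if_congr last rfl rfl,
      Finset.sum_congr rfl fun s hs => by rw [earlier s hs]]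
  · have not_suffix : ¬ w <:+ W ++ [d] := fun h => by have := h.length_le; lia
    rw [if_neg not_suffix, hlen, Nat.sub_eq_zero_of_le hlt, Nat.sub_eq_zero_of_le hlt.le]
    rfl

/-- The Iverson bracket of the assertion that the base-`b` digit string of `n` ends in `w`. -/
def suffixIndicator (b n : ℕ) (w : List ℕ) : ℚ := if w <:+ wordOf b n then 1 else 0

lemma suffixIndicator_nil (b n : ℕ) : suffixIndicator b n [] = 1 := by
  simp [suffixIndicator]

lemma suffixIndicator_mul_of_suffix (b n : ℕ) {u w : List ℕ} (h : u <:+ w) :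
    suffixIndicator b n u * suffixIndicator b n w = suffixIndicator b n w := by
  unfold suffixIndicator
  split_ifs with hu hw <;> simp_all [h.trans]

lemma suffixIndicator_mul_eq_zero (b n : ℕ) {u w : List ℕ} (hu : ¬ u <:+ w) (hw : ¬ w <:+ u) :
    suffixIndicator b n u * suffixIndicator b n w = 0 := by
  unfold suffixIndicator
  split_ifs with hun hwn
  · exact absurd (List.suffix_or_suffix_of_suffix hun hwn) (not_or.mpr ⟨hu, hw⟩)
  all_goals simp

section Digit

variable {b d : ℕ}

lemma wordOf_mul_add_s18 (hb : 1 < b) (hd : d < b) {n : ℕ} (h : d ≠ 0 ∨ n ≠ 0) :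
    wordOf b (b * n + d) = wordOf b n ++ [d] := by
  rw [wordOf, add_comm, Nat.digits_add b hb d n hd h, List.reverse_cons, wordOf]

lemma subwordCount_mul_add_s18 (hb : 1 < b) (hd : d < b) (n : ℕ) {w : List ℕ} (hw : w ≠ []) :
    (subwordCount b (b * n + d) w : ℚ) =
      subwordCount b n w + suffixIndicator b (b * n + d) w := by
  by_cases h : d ≠ 0 ∨ n ≠ 0
  · change (occurrenceCount (wordOf b (b * n + d)) w : ℚ) = occurrenceCount (wordOf b n) w + _
    rw [suffixIndicator, wordOf_mul_add_s18 hb hd h, occurrenceCount_concat _ _ hw]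
    push_cast
    rfl
  · obtain ⟨rfl, rfl⟩ : d = 0 ∧ n = 0 := by lia
    simp [suffixIndicator, wordOf, hw]

lemma suffixIndicator_mul_add (hb : 1 < b) (hd : d < b) (n : ℕ) {w : List ℕ} (hw : w ≠ [])
    (hw0 : w ≠ [0]) :
    suffixIndicator b (b * n + d) w =
      if w.getLast hw = d then suffixIndicator b n w.dropLast else 0 := by
  obtain ⟨u, e, rfl⟩ : ∃ u e, w = u ++ [e] := ⟨_, _, (w.dropLast_append_getLast hw).symm⟩
  rw [List.getLast_append_singleton, List.dropLast_concat]
  by_cases h : d ≠ 0 ∨ n ≠ 0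
  · have suffix_iff : u ++ [e] <:+ wordOf b n ++ [d] ↔ e = d ∧ u <:+ wordOf b n := by
      simp [List.suffix_concat_iff]
    rw [suffixIndicator, wordOf_mul_add_s18 hb hd h, if_congr suffix_iff rfl rfl, ite_and,
      suffixIndicator]
  · obtain ⟨rfl, rfl⟩ : d = 0 ∧ n = 0 := by lia
    have hu : e = 0 → u ≠ [] := by rintro rfl rfl; exact hw0 rfl
    by_cases he : e = 0 <;> simp_all [suffixIndicator, wordOf]

end Digit

section Binary

variable (n : ℕ)

lemma subwordCount_two_mul (a : ℕ) (v : List ℕ) :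
    (subwordCount 2 (2 * n) (a :: v) : ℚ) =
      subwordCount 2 n (a :: v) + suffixIndicator 2 (2 * n) (a :: v) :=
  subwordCount_mul_add_s18 one_lt_two two_pos n (List.cons_ne_nil a v)

lemma subwordCount_two_mul_add_one (a : ℕ) (v : List ℕ) :
    (subwordCount 2 (2 * n + 1) (a :: v) : ℚ) =
      subwordCount 2 n (a :: v) + suffixIndicator 2 (2 * n + 1) (a :: v) :=
  subwordCount_mul_add_s18 one_lt_two one_lt_two n (List.cons_ne_nil a v)

lemma suffixIndicator_two_mul_one_cons (v : List ℕ) :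
    suffixIndicator 2 (2 * n) (1 :: v) =
      if (1 :: v).getLast (List.cons_ne_nil 1 v) = 0 then suffixIndicator 2 n (1 :: v).dropLast
      else 0 :=
  suffixIndicator_mul_add one_lt_two two_pos n (List.cons_ne_nil 1 v) (by simp)

lemma suffixIndicator_two_mul_add_one_one_cons (v : List ℕ) :
    suffixIndicator 2 (2 * n + 1) (1 :: v) =
      if (1 :: v).getLast (List.cons_ne_nil 1 v) = 1 then suffixIndicator 2 n (1 :: v).dropLast
      else 0 :=
  suffixIndicator_mul_add one_lt_two one_lt_two n (List.cons_ne_nil 1 v) (by simp)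

lemma subwordCount_two_mul_singleton_one :
    subwordCount 2 (2 * n) [1] = subwordCount 2 n [1] := by
  have h := subwordCount_two_mul n 1 []
  simp only [suffixIndicator_two_mul_one_cons, List.getLast, one_ne_zero, ↓reduceIte,
    add_zero] at h
  exact_mod_cast h

lemma subwordCount_two_mul_add_one_singleton_one :
    subwordCount 2 (2 * n + 1) [1] = subwordCount 2 n [1] + 1 := by
  have h := subwordCount_two_mul_add_one n 1 []
  simp only [suffixIndicator_two_mul_add_one_one_cons, List.getLast, List.dropLast, ↓reduceIte,
    suffixIndicator_nil] at h
  exact_mod_cast h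

/-- The number of `m ≤ n` such that `carryChoose c n m` is not divisible by `2 ^ j`, divided by
`2 ^ |n|_1`. By `rowDensity_zero_one` the normalising factor is the count for `c = 0`, `j = 1`. -/
def rowDensity (c j n : ℕ) : ℚ := carryRowCount c (2 ^ j) n / 2 ^ subwordCount 2 n [1]

lemma rowCount_two_pow_eq (j : ℕ) :
    (rowCount (2 ^ j) n : ℚ) = 2 ^ subwordCount 2 n [1] * rowDensity 0 j n := by
  rw [rowDensity, carryRowCount_zero_left]
  field_simp

lemma rowDensity_exponent_zero (c : ℕ) : rowDensity c 0 n = 0 := by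
  simp [rowDensity, carryRowCount_one_right]

lemma rowDensity_zero_succ_zero (j : ℕ) : rowDensity 0 (j + 1) 0 = 1 := by
  simp [rowDensity, carryRowCount, subwordCount, wordOf, carryChoose_zero, Finset.filter_singleton]

variable (j : ℕ)

lemma rowDensity_zero_two_mul :
    rowDensity 0 (j + 1) (2 * n) = rowDensity 0 (j + 1) n + rowDensity 1 j n := by
  have count := carryRowCount_mul_add (p := 2) zero_le_one two_pos j n
  rw [rowDensity, subwordCount_two_mul_singleton_one, ← add_zero (2 * n), count, rowDensity,
    rowDensity]
  push_cast
  ring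

lemma rowDensity_zero_two_mul_add_one :
    rowDensity 0 (j + 1) (2 * n + 1) = rowDensity 0 (j + 1) n := by
  have count := carryRowCount_mul_add (p := 2) zero_le_one one_lt_two j n
  rw [rowDensity, subwordCount_two_mul_add_one_singleton_one, count, rowDensity]
  push_cast
  field_simp
  ring

lemma rowDensity_one_two_mul : rowDensity 1 (j + 1) (2 * n) = 2 * rowDensity 1 j n := by
  have count := carryRowCount_mul_add (p := 2) le_rfl two_pos j n
  rw [rowDensity, subwordCount_two_mul_singleton_one, ← add_zero (2 * n), count, rowDensity]
  push_cast
  ring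

lemma rowDensity_one_two_mul_add_one :
    rowDensity 1 (j + 1) (2 * n + 1) = (rowDensity 0 (j + 1) n + rowDensity 1 j n) / 2 := by
  have count := carryRowCount_mul_add (p := 2) le_rfl one_lt_two j n
  rw [rowDensity, subwordCount_two_mul_add_one_singleton_one, count, rowDensity, rowDensity]
  push_cast
  field_simp
  ring

end Binary

lemma rowDensity_zero_one (n : ℕ) : rowDensity 0 1 n = 1 := by
  induction n using Nat.evenOddRec with
  | h0 => exact rowDensity_zero_succ_zero 0
  | h_even n ih => rw [rowDensity_zero_two_mul, ih, rowDensity_exponent_zero, add_zero]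
  | h_odd n ih => rw [rowDensity_zero_two_mul_add_one, ih]

lemma rowDensity_one_one (n : ℕ) : rowDensity 1 1 n = 1 / 2 * suffixIndicator 2 n [1] := by
  obtain ⟨m, rfl | rfl⟩ := n.even_or_odd'
  · rw [rowDensity_one_two_mul, rowDensity_exponent_zero]
    simp [suffixIndicator_two_mul_one_cons]
  · rw [rowDensity_one_two_mul_add_one, rowDensity_zero_one, rowDensity_exponent_zero]
    simp [suffixIndicator_two_mul_add_one_one_cons, suffixIndicator_nil]

lemma rowDensity_zero_two (n : ℕ) :
    rowDensity 0 2 n = 1 + 1 / 2 * (subwordCount 2 n [1, 0] : ℚ) := by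
  induction n using Nat.evenOddRec with
  | h0 => simp [rowDensity_zero_succ_zero, subwordCount, wordOf]
  | h_even n ih =>
    rw [rowDensity_zero_two_mul, ih, rowDensity_one_one]
    simp only [subwordCount_two_mul, suffixIndicator_two_mul_one_cons, List.getLast,
      List.dropLast, ↓reduceIte]
    ring
  | h_odd n ih =>
    rw [rowDensity_zero_two_mul_add_one, ih]
    simp [subwordCount_two_mul_add_one, suffixIndicator_two_mul_add_one_one_cons]

lemma rowDensity_one_two (n : ℕ) :
    rowDensity 1 2 n =
      suffixIndicator 2 n [1] * (1 / 2 + 1 / 4 * (subwordCount 2 n [1, 0] : ℚ)) +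
        suffixIndicator 2 n [1, 0] + 1 / 4 * suffixIndicator 2 n [1, 1] := by
  obtain ⟨m, rfl | rfl⟩ := n.even_or_odd'
  · rw [rowDensity_one_two_mul, rowDensity_one_one]
    simp [suffixIndicator_two_mul_one_cons]
  · rw [rowDensity_one_two_mul_add_one, rowDensity_zero_two, rowDensity_one_one]
    simp only [subwordCount_two_mul_add_one, suffixIndicator_two_mul_add_one_one_cons,
      List.getLast, List.dropLast, zero_ne_one, ↓reduceIte, suffixIndicator_nil]
    ring

lemma rowDensity_zero_three (n : ℕ) :
    rowDensity 0 3 n =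
      1 + 3 / 8 * (subwordCount 2 n [1, 0] : ℚ) + (subwordCount 2 n [1, 0, 0] : ℚ) +
        1 / 4 * (subwordCount 2 n [1, 1, 0] : ℚ) + 1 / 8 * (subwordCount 2 n [1, 0] : ℚ) ^ 2 := by
  induction n using Nat.evenOddRec with
  | h0 => simp [rowDensity_zero_succ_zero, subwordCount, wordOf]
  | h_even n ih =>
    have one_mul_self : suffixIndicator 2 n [1] * suffixIndicator 2 n [1] =
        suffixIndicator 2 n [1] :=
      suffixIndicator_mul_of_suffix 2 n (List.suffix_refl [1])
    rw [rowDensity_zero_two_mul, ih, rowDensity_one_two]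
    simp only [subwordCount_two_mul, suffixIndicator_two_mul_one_cons, List.getLast,
      List.dropLast, ↓reduceIte]
    linear_combination -(1 / 8) * one_mul_self
  | h_odd n ih =>
    rw [rowDensity_zero_two_mul_add_one, ih]
    simp [subwordCount_two_mul_add_one, suffixIndicator_two_mul_add_one_one_cons]

lemma rowDensity_one_three (n : ℕ) :
    rowDensity 1 3 n =
      suffixIndicator 2 n [1] *
          (1 / 2 + 3 / 16 * (subwordCount 2 n [1, 0] : ℚ) +
            1 / 2 * (subwordCount 2 n [1, 0, 0] : ℚ) + 1 / 8 * (subwordCount 2 n [1, 1, 0] : ℚ) +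
            1 / 16 * (subwordCount 2 n [1, 0] : ℚ) ^ 2) +
        suffixIndicator 2 n [1, 0] * (1 / 2 + 1 / 2 * (subwordCount 2 n [1, 0] : ℚ)) +
        suffixIndicator 2 n [1, 1] * (1 / 4 + 1 / 8 * (subwordCount 2 n [1, 0] : ℚ)) +
        2 * suffixIndicator 2 n [1, 0, 0] + 1 / 2 * suffixIndicator 2 n [1, 0, 1] +
        1 / 2 * suffixIndicator 2 n [1, 1, 0] + 1 / 8 * suffixIndicator 2 n [1, 1, 1] := by
  obtain ⟨m, rfl | rfl⟩ := n.even_or_odd'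
  · have one_mul_self : suffixIndicator 2 m [1] * suffixIndicator 2 m [1] =
        suffixIndicator 2 m [1] :=
      suffixIndicator_mul_of_suffix 2 m (List.suffix_refl [1])
    rw [rowDensity_one_two_mul, rowDensity_one_two]
    simp only [subwordCount_two_mul, suffixIndicator_two_mul_one_cons, List.getLast,
      List.dropLast, one_ne_zero, ↓reduceIte]
    linear_combination -(1 / 2) * one_mul_self
  · rw [rowDensity_one_two_mul_add_one, rowDensity_zero_three, rowDensity_one_two]
    simp only [subwordCount_two_mul_add_one, suffixIndicator_two_mul_add_one_one_cons,
      List.getLast, List.dropLast, zero_ne_one, ↓reduceIte, suffixIndicator_nil]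
    ring

lemma rowDensity_zero_four (n : ℕ) :
    rowDensity 0 4 n =
      1 + (5 / 12) * (subwordCount 2 n [1, 0] : ℚ) +
        (1 / 2) * (subwordCount 2 n [1, 0, 0] : ℚ) +
        (1 / 8) * (subwordCount 2 n [1, 1, 0] : ℚ) +
        2 * (subwordCount 2 n [1, 0, 0, 0] : ℚ) +
        (1 / 2) * (subwordCount 2 n [1, 0, 1, 0] : ℚ) +
        (1 / 2) * (subwordCount 2 n [1, 1, 0, 0] : ℚ) +
        (1 / 8) * (subwordCount 2 n [1, 1, 1, 0] : ℚ) +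
        (1 / 16) * (subwordCount 2 n [1, 0] : ℚ) ^ 2 +
        (1 / 2) * (subwordCount 2 n [1, 0] : ℚ) * (subwordCount 2 n [1, 0, 0] : ℚ) +
        (1 / 8) * (subwordCount 2 n [1, 0] : ℚ) * (subwordCount 2 n [1, 1, 0] : ℚ) +
        (1 / 48) * (subwordCount 2 n [1, 0] : ℚ) ^ 3 := by
  induction n using Nat.evenOddRec with
  | h0 => simp [rowDensity_zero_succ_zero, subwordCount, wordOf]
  | h_even n ih =>
    have one_mul_self : suffixIndicator 2 n [1] * suffixIndicator 2 n [1] =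
        suffixIndicator 2 n [1] :=
      suffixIndicator_mul_of_suffix 2 n (List.suffix_refl [1])
    have one_mul_oneOne : suffixIndicator 2 n [1] * suffixIndicator 2 n [1, 1] =
        suffixIndicator 2 n [1, 1] :=
      suffixIndicator_mul_of_suffix 2 n (by decide)
    have one_mul_oneZero : suffixIndicator 2 n [1] * suffixIndicator 2 n [1, 0] = 0 :=
      suffixIndicator_mul_eq_zero 2 n (by decide) (by decide)
    rw [rowDensity_zero_two_mul, ih, rowDensity_one_three]
    simp only [subwordCount_two_mul, suffixIndicator_two_mul_one_cons, List.getLast,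
      List.dropLast, ↓reduceIte]
    linear_combination -(1 / 12 + (subwordCount 2 n [1, 0] : ℚ) / 16 +
      suffixIndicator 2 n [1] / 48) * one_mul_self -
      1 / 2 * one_mul_oneZero - 1 / 8 * one_mul_oneOne
  | h_odd n ih =>
    rw [rowDensity_zero_two_mul_add_one, ih]
    simp [subwordCount_two_mul_add_one, suffixIndicator_two_mul_add_one_one_cons]

/-- For every `n ≥ 0`, as an identity in the rational numbers, the formula for `a_{16}(n)` in
terms of base-2 subword counts. -/
theorem stmt18 (n : ℕ) :
    (rowCount 16 n : ℚ) =
      2 ^ subwordCount 2 n [1] *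
        (1 + (5 / 12) * (subwordCount 2 n [1, 0] : ℚ) +
          (1 / 2) * (subwordCount 2 n [1, 0, 0] : ℚ) +
          (1 / 8) * (subwordCount 2 n [1, 1, 0] : ℚ) +
          2 * (subwordCount 2 n [1, 0, 0, 0] : ℚ) +
          (1 / 2) * (subwordCount 2 n [1, 0, 1, 0] : ℚ) +
          (1 / 2) * (subwordCount 2 n [1, 1, 0, 0] : ℚ) +
          (1 / 8) * (subwordCount 2 n [1, 1, 1, 0] : ℚ) +
          (1 / 16) * (subwordCount 2 n [1, 0] : ℚ) ^ 2 +
          (1 / 2) * (subwordCount 2 n [1, 0] : ℚ) * (subwordCount 2 n [1, 0, 0] : ℚ) +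
          (1 / 8) * (subwordCount 2 n [1, 0] : ℚ) * (subwordCount 2 n [1, 1, 0] : ℚ) +
          (1 / 48) * (subwordCount 2 n [1, 0] : ℚ) ^ 3) := by
  rw [← rowDensity_zero_four]
  exact rowCount_two_pow_eq n 4
end
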